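/- Let E = EuclideanSpace ℝ (Fin p) with p ≥ 1, let η > 0 and λ ≤ Λ be real numbers, and set α = max{|1-ηλ|, |1-ηΛ|} and γ = α^m for a fixed m ≥ 1. For each round t ∈ {1,…,T}, let K_t be a nonempty finite index set, let a_{t,k} ≥ 0 with Σ_{k∈K_t} a_{t,k} = 1, and for each k ∈ K_t and i ∈ {0,…,m-1} let H_{t,k,i} : E →L[ℝ] E be self-adjoint with λ‖v‖² ≤ ⟪H_{t,k,i} v, v⟫ ≤ Λ‖v‖² for all v ∈ E. Define M_t = Σ_{k∈K_t} a_{t,k} · ∏_{i=m-1}^{0} (I - η H_{t,k,i}) (operator composition). Let b_t ∈ E and let sequences ε*, ε : ℕ → E satisfy ε*_0 = ε_0 = 0, ε_t = M_t ε_{t-1} + b_t for t ≥ 1, and ‖ε*_t - M_t ε*_{t-1} - b_t‖ ≤ e for all t ≥ 1 with some e ≥ 0. Then for every t ≥ 0, ‖ε*_t - ε_t‖ ≤ e · Σ_{i=0}^{t-1} γ^i. -/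

import Mathlib

open scoped RealInnerProductSpace

/-!
On a symmetric operator the norm is the supremum of the absolute Rayleigh quotients. Those of
`I - ηH` are `1 - ηq` with `q` a Rayleigh quotient of `H`, hence `q ∈ [λ, Λ]`, and `|1 - ηq|` is
largest at an endpoint: each local step has norm at most `α`. So `m` steps have norm at most
`γ = α ^ m`, which convex averaging over the clients preserves. The exact influence is thus
an orbit with error `e` per round of `γ`-Lipschitz maps of which the estimator is an exact orbit.
-/

theorem abs_one_sub_mul_le_max {R : Type*} [Ring R] [LinearOrder R] [IsOrderedRing R]
    (η : R) {lam Lam q : R} (hlam : lam ≤ q) (hLam : q ≤ Lam) :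
    |1 - η * q| ≤ max |1 - η * lam| |1 - η * Lam| := by
  rcases le_total 0 η with hη | hη
  · rw [max_comm]
    exact abs_le_max_abs_abs (sub_le_sub_left (mul_le_mul_of_nonneg_left hLam hη) 1)
      (sub_le_sub_left (mul_le_mul_of_nonneg_left hlam hη) 1)
  · exact abs_le_max_abs_abs (sub_le_sub_left (mul_le_mul_of_nonpos_left hlam hη) 1)
      (sub_le_sub_left (mul_le_mul_of_nonpos_left hLam hη) 1)

theorem norm_list_prod_le_pow_length {R : Type*} [SeminormedRing R] (h_one : ‖(1 : R)‖ ≤ 1)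
    {c : ℝ} {l : List R} (hl : ∀ x ∈ l, ‖x‖ ≤ c) : ‖l.prod‖ ≤ c ^ l.length := by
  induction l with
  | nil => simpa using h_one
  | cons x l ih =>
    obtain ⟨hx, hl⟩ := List.forall_mem_cons.1 hl
    rw [List.prod_cons, List.length_cons, pow_succ']
    exact (norm_mul_le x l.prod).trans
      (mul_le_mul hx (ih hl) (norm_nonneg _) ((norm_nonneg x).trans hx))

theorem dist_le_mul_geom_sum_of_lipschitzWith {X : Type*} [PseudoMetricSpace X] {T : ℕ}
    {F : ℕ → X → X} {γ : NNReal} (hF : ∀ t < T, LipschitzWith γ (F t)) {x y : ℕ → X} {e : ℝ}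
    (h_init : x 0 = y 0) (hx : ∀ t < T, dist (x (t + 1)) (F t (x t)) ≤ e)
    (hy : ∀ t < T, y (t + 1) = F t (y t)) {t : ℕ} (ht : t ≤ T) :
    dist (x t) (y t) ≤ e * ∑ i ∈ Finset.range t, (γ : ℝ) ^ i := by
  induction t with
  | zero => simp [h_init]
  | succ t ih =>
    calc dist (x (t + 1)) (y (t + 1))
        ≤ dist (x (t + 1)) (F t (x t)) + dist (F t (x t)) (F t (y t)) := by
          rw [hy t ht]; exact dist_triangle _ _ _
      _ ≤ e + γ * dist (x t) (y t) := add_le_add (hx t ht) ((hF t ht).dist_le_mul _ _)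
      _ ≤ e + γ * (e * ∑ i ∈ Finset.range t, (γ : ℝ) ^ i) := by gcongr; exact ih (by omega)
      _ = e * ∑ i ∈ Finset.range (t + 1), (γ : ℝ) ^ i := by rw [geom_sum_succ]; ring

section Rayleigh

variable {𝕜 E : Type*} [RCLike 𝕜] [NormedAddCommGroup E] [InnerProductSpace 𝕜 E]

theorem rayleighQuotient_id_sub_smul (η : ℝ) (H : E →L[𝕜] E) {x : E} (hx : x ≠ 0) :
    (ContinuousLinearMap.id 𝕜 E - (η : 𝕜) • H).rayleighQuotient x =
      1 - η * H.rayleighQuotient x := by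
  have hx' : ‖x‖ ≠ 0 := norm_ne_zero_iff.2 hx
  simp [ContinuousLinearMap.rayleighQuotient, ContinuousLinearMap.reApplyInnerSelf_apply,
    inner_sub_left, inner_smul_left, sub_div, mul_div_assoc, hx']

theorem norm_id_sub_smul_le_max {η lam Lam : ℝ} {H : E →L[𝕜] E} (hH : H.IsSymmetric)
    (hbound : ∀ v, lam * ‖v‖ ^ 2 ≤ RCLike.re (inner 𝕜 (H v) v) ∧
      RCLike.re (inner 𝕜 (H v) v) ≤ Lam * ‖v‖ ^ 2) :
    ‖ContinuousLinearMap.id 𝕜 E - (η : 𝕜) • H‖ ≤ max |1 - η * lam| |1 - η * Lam| := by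
  have h_symm : (ContinuousLinearMap.id 𝕜 E - (η : 𝕜) • H).IsSymmetric :=
    LinearMap.IsSymmetric.id.sub (hH.smul (RCLike.conj_ofReal η))
  rw [ContinuousLinearMap.norm_eq_iSup_rayleighQuotient _ h_symm]
  refine ciSup_le fun x ↦ ?_
  rcases eq_or_ne x 0 with rfl | hx
  · simp
  have hx_pos : 0 < ‖x‖ ^ 2 := pow_pos (norm_pos_iff.2 hx) 2
  rw [rayleighQuotient_id_sub_smul η H hx]
  exact abs_one_sub_mul_le_max η ((le_div_iff₀ hx_pos).2 (hbound x).1)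
    ((div_le_iff₀ hx_pos).2 (hbound x).2)

end Rayleigh

section LocalSGD

variable {E : Type*} [NormedAddCommGroup E] [InnerProductSpace ℝ E]

/-- The linearization `(I - ηH_{m-1}) ∘ ⋯ ∘ (I - ηH_0)` of `m` gradient steps of learning rate `η`
with Hessians `H_0, …, H_{m-1}`. The list is reversed so that step `0` is applied first. -/
noncomputable def localSGDJacobian (η : ℝ) (m : ℕ) (H : ℕ → E →L[ℝ] E) : E →L[ℝ] E :=
  ((List.range m).map fun i ↦ ContinuousLinearMap.id ℝ E - η • H i).reverse.prod

theorem norm_localSGDJacobian_le {η lam Lam : ℝ} {m : ℕ} {H : ℕ → E →L[ℝ] E}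
    (hsymm : ∀ i < m, (H i).IsSymmetric)
    (hbound : ∀ i < m, ∀ v, lam * ‖v‖ ^ 2 ≤ ⟪H i v, v⟫ ∧ ⟪H i v, v⟫ ≤ Lam * ‖v‖ ^ 2) :
    ‖localSGDJacobian η m H‖ ≤ max |1 - η * lam| |1 - η * Lam| ^ m := by
  have h_factor : ∀ A ∈ ((List.range m).map fun i ↦
      ContinuousLinearMap.id ℝ E - η • H i).reverse,
      ‖A‖ ≤ max |1 - η * lam| |1 - η * Lam| := by
    simp only [List.mem_reverse, List.forall_mem_map, List.mem_range]
    exact fun i hi ↦ norm_id_sub_smul_le_max (hsymm i hi) (hbound i hi)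
  simpa [localSGDJacobian] using
    norm_list_prod_le_pow_length ContinuousLinearMap.norm_id_le h_factor

theorem norm_sum_smul_localSGDJacobian_le {κ : Type*} {s : Finset κ} {a : κ → ℝ}
    (ha : ∀ k ∈ s, 0 ≤ a k) (hsum : ∑ k ∈ s, a k = 1) {η lam Lam : ℝ} {m : ℕ}
    {H : κ → ℕ → E →L[ℝ] E} (hsymm : ∀ k ∈ s, ∀ i < m, (H k i).IsSymmetric)
    (hbound : ∀ k ∈ s, ∀ i < m, ∀ v,
      lam * ‖v‖ ^ 2 ≤ ⟪H k i v, v⟫ ∧ ⟪H k i v, v⟫ ≤ Lam * ‖v‖ ^ 2) :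
    ‖∑ k ∈ s, a k • localSGDJacobian η m (H k)‖ ≤ max |1 - η * lam| |1 - η * Lam| ^ m :=
  mem_closedBall_zero_iff.1 <| (convex_closedBall 0 _).sum_mem ha hsum fun k hk ↦
    mem_closedBall_zero_iff.2 (norm_localSGDJacobian_le (hsymm k hk) (hbound k hk))

end LocalSGD

theorem stmt_0_general {E κ : Type*} [NormedAddCommGroup E] [InnerProductSpace ℝ E]
    {m T : ℕ} {η lam Lam α γ : ℝ} (hα : α = max |1 - η * lam| |1 - η * Lam|) (hγ : γ = α ^ m)
    {K : ℕ → Finset κ} {a : ℕ → κ → ℝ}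
    (ha : ∀ t, 1 ≤ t → t ≤ T → ∀ k ∈ K t, 0 ≤ a t k)
    (hsum : ∀ t, 1 ≤ t → t ≤ T → ∑ k ∈ K t, a t k = 1)
    {H : ℕ → κ → ℕ → E →L[ℝ] E}
    (hsymm : ∀ t, 1 ≤ t → t ≤ T → ∀ k ∈ K t, ∀ i < m, (H t k i).IsSymmetric)
    (hbound : ∀ t, 1 ≤ t → t ≤ T → ∀ k ∈ K t, ∀ i < m, ∀ v,
      lam * ‖v‖ ^ 2 ≤ ⟪H t k i v, v⟫ ∧ ⟪H t k i v, v⟫ ≤ Lam * ‖v‖ ^ 2)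
    {M : ℕ → E →L[ℝ] E}
    (hM : ∀ t, 1 ≤ t → t ≤ T → M t = ∑ k ∈ K t, a t k • localSGDJacobian η m (H t k))
    {b εstar ε : ℕ → E} (h_init : εstar 0 = ε 0)
    (hε : ∀ t, 1 ≤ t → t ≤ T → ε t = M t (ε (t - 1)) + b t) {e : ℝ}
    (hrem : ∀ t, 1 ≤ t → t ≤ T → ‖εstar t - M t (εstar (t - 1)) - b t‖ ≤ e)
    {t : ℕ} (ht : t ≤ T) :
    ‖εstar t - ε t‖ ≤ e * ∑ i ∈ Finset.range t, γ ^ i := by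
  lift γ to NNReal using by rw [hγ, hα]; positivity
  have hM_norm : ∀ t, 1 ≤ t → t ≤ T → ‖M t‖ ≤ γ := fun t ht_pos hT ↦ by
    rw [hM t ht_pos hT, hγ, hα]
    exact norm_sum_smul_localSGDJacobian_le (ha t ht_pos hT) (hsum t ht_pos hT)
      (hsymm t ht_pos hT) (hbound t ht_pos hT)
  have h_lipschitz : ∀ t < T, LipschitzWith γ fun v ↦ M (t + 1) v + b (t + 1) := fun t hT ↦
    LipschitzWith.of_dist_le_mul fun u v ↦ by
      rw [dist_add_right]
      exact ((M (t + 1)).lipschitz.weaken (hM_norm _ (by omega) hT)).dist_le_mul u v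
  rw [← dist_eq_norm]
  refine dist_le_mul_geom_sum_of_lipschitzWith h_lipschitz h_init (fun t hT ↦ ?_)
    (fun t hT ↦ hε (t + 1) (by omega) hT) ht
  simpa only [dist_eq_norm, sub_sub, Nat.add_sub_cancel] using hrem (t + 1) (by omega) hT

/-- Theorem 1 of the paper: error bound of the basic Fed-Influence estimator.
With `M_t = Σ_{k∈K_t} a_{t,k} • (I - ηH_{t,k,m-1}) ∘ ⋯ ∘ (I - ηH_{t,k,0})`, where each
self-adjoint local Hessian satisfies `λI ≼ H ≼ ΛI`, the exact influence `ε*` satisfying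
`‖ε*_t - M_t ε*_{t-1} - b_t‖ ≤ e` and the estimator `ε_t = M_t ε_{t-1} + b_t` with
`ε*_0 = ε_0 = 0` differ by at most `e · Σ_{i=0}^{t-1} γ^i`, `γ = α^m`,
`α = max |1-ηλ| |1-ηΛ|`. -/
theorem stmt_0 (p m T : ℕ) (hp : 1 ≤ p) (hm : 1 ≤ m)
    (η lam Lam : ℝ) (hη : 0 < η) (hlamLam : lam ≤ Lam)
    (α γ : ℝ) (hα : α = max |1 - η * lam| |1 - η * Lam|) (hγ : γ = α ^ m)
    {κ : Type*} (K : ℕ → Finset κ)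
    (hKne : ∀ t, 1 ≤ t → t ≤ T → (K t).Nonempty)
    (a : ℕ → κ → ℝ)
    (ha : ∀ t, 1 ≤ t → t ≤ T → ∀ k ∈ K t, 0 ≤ a t k)
    (hsum : ∀ t, 1 ≤ t → t ≤ T → ∑ k ∈ K t, a t k = 1)
    (H : ℕ → κ → ℕ → (EuclideanSpace ℝ (Fin p) →L[ℝ] EuclideanSpace ℝ (Fin p)))
    (hself : ∀ t, 1 ≤ t → t ≤ T → ∀ k ∈ K t, ∀ i, i < m →
      ∀ u v : EuclideanSpace ℝ (Fin p), ⟪H t k i v, u⟫ = ⟪v, H t k i u⟫)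
    (hbound : ∀ t, 1 ≤ t → t ≤ T → ∀ k ∈ K t, ∀ i, i < m →
      ∀ v : EuclideanSpace ℝ (Fin p),
        lam * ‖v‖ ^ 2 ≤ ⟪H t k i v, v⟫ ∧ ⟪H t k i v, v⟫ ≤ Lam * ‖v‖ ^ 2)
    (M : ℕ → (EuclideanSpace ℝ (Fin p) →L[ℝ] EuclideanSpace ℝ (Fin p)))
    (hM : ∀ t, 1 ≤ t → t ≤ T →
      M t = ∑ k ∈ K t, a t k • ((((List.range m).map fun i =>
        ContinuousLinearMap.id ℝ (EuclideanSpace ℝ (Fin p)) - η • H t k i)).reverse).prod)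
    (b : ℕ → EuclideanSpace ℝ (Fin p))
    (εstar ε : ℕ → EuclideanSpace ℝ (Fin p))
    (hstar0 : εstar 0 = 0) (hε0 : ε 0 = 0)
    (hε : ∀ t, 1 ≤ t → t ≤ T → ε t = M t (ε (t - 1)) + b t)
    (e : ℝ) (he : 0 ≤ e)
    (hrem : ∀ t, 1 ≤ t → t ≤ T → ‖εstar t - M t (εstar (t - 1)) - b t‖ ≤ e) :
    ∀ t, t ≤ T → ‖εstar t - ε t‖ ≤ e * ∑ i ∈ Finset.range t, γ ^ i := by
  exact fun t ↦ stmt_0_general hα hγ ha hsum (fun t ht_pos hT k hk i hi u v ↦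
    hself t ht_pos hT k hk i hi v u) hbound hM (hstar0.trans hε0.symm) hε hrem
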